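/- Let d ≥ 3 be odd, n = (d²+1)/2, and in R = 𝔽₂[x]/(xⁿ−1) set a = 1+x and b = (1+x)·P_d(x). Put u(x) = 1 + x^d + x^{2d} + ⋯ + x^{d·((d−1)/2 − 1)} and v(x) = x^{n−(d+1)/2} + x^{n−(d+1)/2 + 1} + ⋯ + x^{n−1}. Then: (i) (u, v) ∈ C₁(a,b) \ C₂(a,b) and wt(u) + wt(v) = d; (ii) (x·v(x^d), u(x^d)) ∈ C₁(a,b) \ C₂(a,b) and has weight d, where f(x^d) denotes the image of f under the ring endomorphism of R induced by x ↦ x^d; (iii) (u, v) + (x·v(x^d), u(x^d)) ∉ C₂(a,b), so the operators in (i) and (ii) represent distinct nontrivial logical classes; (iv) (1, P_d(x)) ∈ C₁(a,b) \ C₂(a,b) and has weight d+1. Moreover every element of C₁(a,b) \ C₂(a,b) has weight at least d, so the operators in (i) and (ii) have minimum possible weight. -/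

import Mathlib

open Polynomial

noncomputable section

/-- `R2 n` is the ring `𝔽₂[x]/(xⁿ − 1)`. -/
abbrev R2 (n : ℕ) : Type := AdjoinRoot (X ^ n - 1 : (ZMod 2)[X])

/-- The image of `x` in `𝔽₂[x]/(xⁿ − 1)`. -/
def xR (n : ℕ) : R2 n := AdjoinRoot.root _

/-- The quotient map `𝔽₂[x] → 𝔽₂[x]/(xⁿ − 1)`. -/
def mkR (n : ℕ) : (ZMod 2)[X] →+* R2 n := AdjoinRoot.mk _

lemma xR_pow_n (n : ℕ) : xR n ^ n = 1 := by
  have h : (AdjoinRoot.mk (X ^ n - 1 : (ZMod 2)[X])) (X ^ n - 1) = 0 := AdjoinRoot.mk_self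
  rw [map_sub, map_pow, AdjoinRoot.mk_X, map_one, sub_eq_zero] at h
  exact h

/-- The unique representative of degree `< n` of an element of `𝔽₂[x]/(xⁿ − 1)` (junk if `n = 0`). -/
def repP {n : ℕ} (u : R2 n) : (ZMod 2)[X] :=
  if h : n = 0 then 0
  else AdjoinRoot.modByMonicHom (by simpa using monic_X_pow_sub_C (1 : ZMod 2) h) u

/-- The Hamming weight of an element of `𝔽₂[x]/(xⁿ − 1)`: the number of nonzero coefficients
of its degree-`< n` representative. -/
def wt {n : ℕ} (u : R2 n) : ℕ := (repP u).support.card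

/-- Coefficient of the degree-`< n` representative, indexed by `ℤ/n`. -/
def coeffZ {n : ℕ} (u : R2 n) (i : ZMod n) : ZMod 2 := (repP u).coeff i.val

/-- The X-stabilizer space `C₂(a,b) = {(r·a, r·b) : r ∈ R}` of the GB code of `(a,b)`. -/
def C2set (n : ℕ) (a b : R2 n) : Set (R2 n × R2 n) := {p | ∃ r : R2 n, p = (r * a, r * b)}

/-- The space `C₁(a,b) = {(u,v) : u·b + v·a = 0}` of the GB code of `(a,b)`. -/
def C1set (n : ℕ) (a b : R2 n) : Set (R2 n × R2 n) := {p | p.1 * b + p.2 * a = 0}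

/-- The (X-side) minimum distance of the GB code of `(a,b)`. -/
def dGB (n : ℕ) (a b : R2 n) : ℕ :=
  sInf {k | ∃ p ∈ C1set n a b \ C2set n a b, wt p.1 + wt p.2 = k}

/-- `P_m(x) = 1 + x + ⋯ + x^{m−1}` as a polynomial over `𝔽₂`. -/
def PmP (m : ℕ) : (ZMod 2)[X] := ∑ i ∈ Finset.range m, X ^ i

/-- `P_m(x) = 1 + x + ⋯ + x^{m−1}` as an element of `𝔽₂[x]/(xⁿ − 1)`. -/
def PmR (n m : ℕ) : R2 n := ∑ i ∈ Finset.range m, xR n ^ i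

/-- The ring endomorphism of `𝔽₂[x]/(xⁿ − 1)` induced by `x ↦ x^d`. -/
def substHom (n d : ℕ) : R2 n →+* R2 n :=
  AdjoinRoot.lift (algebraMap (ZMod 2) (R2 n)) (xR n ^ d) (by
    simp only [eval₂_sub, eval₂_X_pow, eval₂_one]
    rw [← pow_mul, mul_comm d n, pow_mul, xR_pow_n, one_pow, sub_self])

/-- The Euclidean inner product on `𝔽₂²ⁿ`, in terms of pairs `(u₁, u₂)` of elements of
`𝔽₂[x]/(xⁿ − 1)` (representing the concatenated binary vector `(u₁ | u₂)`). -/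
def eucInner (n : ℕ) (p q : R2 n × R2 n) : ZMod 2 :=
  ∑ i ∈ Finset.range n,
    ((repP p.1).coeff i * (repP q.1).coeff i + (repP p.2).coeff i * (repP q.2).coeff i)

/-- The symplectic inner product of `u₁ + w·u₂` and `v₁ + w·v₂`, i.e.
`Σᵢ (u₁ᵢ·v₂ᵢ + u₂ᵢ·v₁ᵢ)`, in terms of the pairs `(u₁,u₂)`, `(v₁,v₂)`. -/
def sympInner (n : ℕ) (p q : R2 n × R2 n) : ZMod 2 :=
  ∑ i ∈ Finset.range n,
    ((repP p.1).coeff i * (repP q.2).coeff i + (repP p.2).coeff i * (repP q.1).coeff i)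

/-- Euclidean dual of a set of (pairs representing) binary vectors of length `2n`. -/
def eucDual (n : ℕ) (S : Set (R2 n × R2 n)) : Set (R2 n × R2 n) :=
  {p | ∀ q ∈ S, eucInner n q p = 0}

/-- Symplectic dual of a set of (pairs representing) vectors of `𝔽₄ⁿ`. -/
def sympDual (n : ℕ) (S : Set (R2 n × R2 n)) : Set (R2 n × R2 n) :=
  {p | ∀ q ∈ S, sympInner n q p = 0}

/-- Number of nonzero `𝔽₄`-coordinates of `u₁ + w·u₂`, in terms of the pair `(u₁,u₂)`. -/
def wt4 (n : ℕ) (p : R2 n × R2 n) : ℕ := ((repP p.1).support ∪ (repP p.2).support).card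

/-- The `2n` binary coordinates of a pair `(u₁,u₂)`. -/
def coords {n : ℕ} (p : R2 n × R2 n) : (Fin n ⊕ Fin n) → ZMod 2 :=
  Sum.elim (fun i => (repP p.1).coeff i) (fun i => (repP p.2).coeff i)

/-- Vertex set of the Tanner graph: check vertices `x_t` (left) and data vertices
`q_s`, `q'_s` (right). -/
def TV (n : ℕ) : Type := (ZMod n) ⊕ ((ZMod n) ⊕ (ZMod n))

/-- `trel a b v w` holds iff `v` is a check vertex `x_t`, `w` is a data vertex, and they are
connected: `x_t ~ q_s` iff `a_{s−t} = 1`, and `x_t ~ q'_s` iff `b_{s−t} = 1`. -/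
def trel {n : ℕ} (a b : R2 n) (v w : TV n) : Prop :=
  ∃ t s : ZMod n, v = Sum.inl t ∧
    ((w = Sum.inr (Sum.inl s) ∧ coeffZ a (s - t) = 1) ∨
     (w = Sum.inr (Sum.inr s) ∧ coeffZ b (s - t) = 1))

/-- The Tanner graph `T(a,b)` of the GB code of `(a,b)`. -/
def tanner (n : ℕ) (a b : R2 n) : SimpleGraph (TV n) where
  Adj v w := trel a b v w ∨ trel a b w v
  symm := ⟨fun v w h => Or.symm h⟩
  loopless := by
    constructor
    rintro v (⟨t, s, hv, hw⟩ | ⟨t, s, hv, hw⟩) <;>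
      rcases hw with ⟨hw, -⟩ | ⟨hw, -⟩ <;> (subst hv; simp at hw)

end

noncomputable section

/-!
A word `(u, v)` of `C₁(a, b)` is an even subgraph of the graph on `ℤ/n` with edges `i — i + d` (for
the monomials `xⁱ` of `u`) and `i — i + 1` (for those of `v`). Orienting such a subgraph along closed
trails gives signed edge counts `s ≡ wt u` and `t ≡ wt v` modulo 2 with `|s| ≤ wt u`, `|t| ≤ wt v`
and `d s + t ≡ 0` modulo `n`. Since `2 n = d² + 1`, the lattice of all such `(s, t)` has no nonzero
vector of `ℓ¹`-norm below `d`, so a word of weight below `d` has both weights even. For odd `n`, where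
`xⁿ - 1` is squarefree, such words are exactly the stabilizers. The explicit operators are loops
winding around the graph, and `x ↦ x^d` acts as a rotation exchanging the two kinds of edges.
-/

section Orientation

variable {ι G : Type*}

/-- The boundary modulo 2 of an edge joining `x` and `y`, as a formal sum of vertices. -/
def edgeBoundary (x y : G) : G →₀ ZMod 2 :=
  Finsupp.single x 1 + Finsupp.single y 1

lemma edgeBoundary_comm (x y : G) : edgeBoundary x y = edgeBoundary y x :=
  add_comm _ _

lemma edgeBoundary_add_edgeBoundary (x y z : G) :
    edgeBoundary x y + edgeBoundary y z = edgeBoundary x z := by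
  rw [edgeBoundary, edgeBoundary, add_assoc, ← add_assoc (Finsupp.single y 1),
    ZModModule.add_self, zero_add, edgeBoundary]

lemma edgeBoundary_eq_zero_iff {x y : G} : edgeBoundary x y = 0 ↔ x = y := by
  rw [edgeBoundary, ← ZModModule.sub_eq_add, sub_eq_zero]
  exact (Finsupp.single_left_injective one_ne_zero).eq_iff

lemma exists_incident_of_sum_edgeBoundary_eq {s : Finset ι} {g h : ι → G} {p q : G}
    (hbd : ∑ e ∈ s, edgeBoundary (g e) (h e) = edgeBoundary p q) (hpq : p ≠ q) :
    ∃ e ∈ s, g e = p ∨ h e = p := by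
  by_contra! hmiss
  have hp := DFunLike.congr_fun hbd p
  rw [Finsupp.finsetSum_apply, Finset.sum_eq_zero fun e he => by
    simp [edgeBoundary, hmiss e he]] at hp
  simp [edgeBoundary, hpq.symm] at hp

variable [AddCommGroup G]

-- Continue the trail along an edge at `p`; if it has already closed up, start a new one anywhere.
lemma exists_trail_step {s : Finset ι} (hs : s.Nonempty) {g h : ι → G} {p q : G}
    (hbd : ∑ e ∈ s, edgeBoundary (g e) (h e) = edgeBoundary p q) :
    ∃ e ∈ s, ∃ (p' q' : G) (σ : ℤˣ),
      edgeBoundary (g e) (h e) = edgeBoundary p q + edgeBoundary p' q' ∧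
      σ • (h e - g e) + (q' - p') = q - p := by
  by_cases hpq : p = q
  · obtain ⟨e, he⟩ := hs
    refine ⟨e, he, h e, g e, 1, ?_, by simp [hpq]⟩
    rw [edgeBoundary_eq_zero_iff.mpr hpq, zero_add, edgeBoundary_comm]
  · obtain ⟨e, he, rfl | rfl⟩ := exists_incident_of_sum_edgeBoundary_eq hbd hpq
    · refine ⟨e, he, h e, q, 1, ?_, by simp⟩
      rw [edgeBoundary_comm (h e) q, edgeBoundary_add_edgeBoundary]
    · refine ⟨e, he, g e, q, -1, ?_, by simp⟩
      rw [edgeBoundary_comm (g e) q, edgeBoundary_add_edgeBoundary, edgeBoundary_comm]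

lemma exists_orientation_of_sum_edgeBoundary_eq {s : Finset ι} {g h : ι → G} {p q : G}
    (hbd : ∑ e ∈ s, edgeBoundary (g e) (h e) = edgeBoundary p q) :
    ∃ ε : ι → ℤˣ, ∑ e ∈ s, ε e • (h e - g e) = q - p := by
  classical
  induction hk : s.card generalizing s p q with
  | zero =>
    obtain rfl := Finset.card_eq_zero.mp hk
    obtain rfl : p = q := edgeBoundary_eq_zero_iff.mp (by simpa using hbd.symm)
    exact ⟨1, by simp⟩
  | succ k ih =>
    obtain ⟨e, he, p', q', σ, hedge, hdisp⟩ :=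
      exists_trail_step (Finset.card_pos.mp (hk ▸ k.succ_pos)) hbd
    have hrest : ∑ i ∈ s.erase e, edgeBoundary (g i) (h i) = edgeBoundary p' q' := by
      rw [Finset.sum_erase_eq_sub he, hbd, hedge, sub_add_cancel_left, ZModModule.neg_eq_self]
    obtain ⟨ε, hε⟩ := ih hrest (by rw [Finset.card_erase_of_mem he, hk, Nat.add_sub_cancel])
    refine ⟨Function.update ε e σ, ?_⟩
    rw [← Finset.add_sum_erase s _ he, Function.update_self, ← hdisp, ← hε]
    congr 1
    refine Finset.sum_congr rfl fun i hi => ?_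
    rw [Function.update_of_ne (Finset.ne_of_mem_erase hi)]

end Orientation

section SignedSum

variable {ι : Type*}

lemma abs_sum_intUnits_le_card (s : Finset ι) (ε : ι → ℤˣ) :
    |∑ i ∈ s, (ε i : ℤ)| ≤ s.card := by
  have hone : ∀ i, |(ε i : ℤ)| = 1 := fun i => Int.isUnit_iff_abs_eq.mp (ε i).isUnit
  simpa [hone] using Finset.abs_sum_le_sum_abs (fun i => (ε i : ℤ)) s

lemma cast_sum_intUnits_eq_card (s : Finset ι) (ε : ι → ℤˣ) :
    ((∑ i ∈ s, (ε i : ℤ) : ℤ) : ZMod 2) = s.card := by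
  have hone : ∀ i, ((ε i : ℤ) : ZMod 2) = 1 := fun i => by
    rcases Int.units_eq_one_or (ε i) with h | h <;> simp [h]
  simp [hone]

end SignedSum

lemma eq_zero_of_dvd_of_abs_add_abs_lt {d n s t : ℤ}
    (hn : 2 * n = d ^ 2 + 1) (hdvd : n ∣ d * s + t) (hlt : |s| + |t| < d) : s = 0 ∧ t = 0 := by
  obtain ⟨α, hα⟩ := hdvd
  have hnpos : 0 < n := by nlinarith
  obtain ⟨β, hβ⟩ : ∃ β, d * t - s = n * β := ⟨d * α - 2 * s, by linear_combination d * hα + s * hn⟩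
  -- In the Gaussian integers, `2 (s + t i) = (d + i) (α + β i)`, and `d + i` has norm `2 n`.
  have hs : 2 * s = d * α - β := by
    apply mul_left_cancel₀ hnpos.ne'
    linear_combination d * hα - hβ + s * hn
  have ht : 2 * t = α + d * β := by
    apply mul_left_cancel₀ hnpos.ne'
    linear_combination hα + d * hβ + t * hn
  have hle : s ^ 2 + t ^ 2 ≤ (d - 1) ^ 2 := by
    rw [← sq_abs s, ← sq_abs t]
    nlinarith [abs_nonneg s, abs_nonneg t]
  have hnorm : n * (α ^ 2 + β ^ 2) = 2 * (s ^ 2 + t ^ 2) := by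
    linear_combination -α * hα - β * hβ - s * hs - t * ht
  have hsmall : α ^ 2 + β ^ 2 < 4 := by nlinarith [abs_nonneg s, abs_nonneg t]
  have hα_cases : α = 0 ∨ α = 1 ∨ α = -1 :=
    Int.abs_le_one_iff.mp (abs_le.mpr ⟨by nlinarith, by nlinarith⟩)
  have hβ_cases : β = 0 ∨ β = 1 ∨ β = -1 :=
    Int.abs_le_one_iff.mp (abs_le.mpr ⟨by nlinarith, by nlinarith⟩)
  have hs_abs := abs_le.mp (le_refl |s|)
  have ht_abs := abs_le.mp (le_refl |t|)
  rcases hα_cases with rfl | rfl | rfl <;> rcases hβ_cases with rfl | rfl | rfl <;> omega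

section QuotientRing

variable {n : ℕ}

/-- The augmentation `𝔽₂[x]/(xⁿ − 1) → 𝔽₂`, `x ↦ 1`, whose value on `u` is the parity of `wt u`. -/
def augmentation (n : ℕ) : R2 n →+* ZMod 2 :=
  AdjoinRoot.lift (RingHom.id (ZMod 2)) 1 (by simp)

lemma mkR_X : mkR n X = xR n := AdjoinRoot.mk_X

lemma mkR_surjective : Function.Surjective (mkR n) := AdjoinRoot.mk_surjective

@[simp]
lemma augmentation_xR : augmentation n (xR n) = 1 := AdjoinRoot.lift_root _

@[simp]
lemma augmentation_PmR (m : ℕ) : augmentation n (PmR n m) = m := by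
  simp [PmR]

@[simp]
lemma substHom_xR (d : ℕ) : substHom n d (xR n) = xR n ^ d := AdjoinRoot.lift_root _

lemma substHom_PmR (d m : ℕ) : substHom n d (PmR n m) = ∑ i ∈ Finset.range m, xR n ^ (d * i) := by
  simp [PmR, pow_mul]

@[simp]
lemma augmentation_substHom (d : ℕ) (u : R2 n) :
    augmentation n (substHom n d u) = augmentation n u := by
  suffices (augmentation n).comp (substHom n d) = augmentation n from RingHom.congr_fun this u
  refine AdjoinRoot.ringHom_ext (Subsingleton.elim _ _) ?_
  change augmentation n (substHom n d (xR n)) = augmentation n (xR n)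
  simp

instance : CharP (R2 n) 2 :=
  haveI : Nontrivial (R2 n) := (augmentation n).domain_nontrivial
  charP_of_injective_algebraMap (algebraMap (ZMod 2) (R2 n)).injective 2

lemma one_add_xR_mul_PmR (m : ℕ) : (1 + xR n) * PmR n m = 1 + xR n ^ m := by
  simpa only [PmR, CharTwo.sub_eq_add, add_comm] using mul_geom_sum (xR n) m

lemma sum_Ico_xR_pow (k m : ℕ) :
    ∑ i ∈ Finset.Ico k m, xR n ^ i = xR n ^ k * PmR n (m - k) := by
  simp only [Finset.sum_Ico_eq_sum_range, PmR, Finset.mul_sum, pow_add]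

lemma augmentation_eq_zero_iff {u : R2 n} : augmentation n u = 0 ↔ 1 + xR n ∣ u := by
  refine ⟨fun hu => ?_, ?_⟩
  · obtain ⟨p, rfl⟩ := mkR_surjective u
    have hroot : p.IsRoot 1 := by
      rw [augmentation, mkR, AdjoinRoot.lift_mk] at hu
      simpa [eval₂_id] using hu
    have hdvd := map_dvd (mkR n) (dvd_iff_isRoot.mpr hroot)
    rw [map_sub, mkR_X, C_1, map_one] at hdvd
    simpa only [CharTwo.sub_eq_add, add_comm] using hdvd
  · rintro ⟨r, rfl⟩
    simp [CharTwo.add_self_eq_zero]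

lemma isReduced_R2 (hn : Odd n) : IsReduced (R2 n) := by
  have hsep : (X ^ n - 1 : (ZMod 2)[X]).Separable := by
    rwa [X_pow_sub_one_separable_iff, ne_eq, ZMod.natCast_eq_zero_iff_even, Nat.not_even_iff_odd]
  refine ⟨fun z ⟨k, hz⟩ => ?_⟩
  obtain ⟨p, rfl⟩ := mkR_surjective z
  rw [mkR, ← map_pow, AdjoinRoot.mk_eq_zero] at hz
  exact AdjoinRoot.mk_eq_zero.mpr (hsep.squarefree.isRadical k p hz)

end QuotientRing

section Weight

variable {n : ℕ} [NeZero n]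

lemma monic_X_pow_sub_one : (X ^ n - 1 : (ZMod 2)[X]).Monic := by
  simpa using monic_X_pow_sub_C (1 : ZMod 2) (NeZero.ne n)

lemma repP_eq_modByMonicHom (u : R2 n) :
    repP u = AdjoinRoot.modByMonicHom monic_X_pow_sub_one u := by
  simp [repP, NeZero.ne n]

lemma repP_mkR (p : (ZMod 2)[X]) : repP (mkR n p) = p %ₘ (X ^ n - 1) := by
  rw [repP_eq_modByMonicHom]
  exact AdjoinRoot.modByMonicHom_mk monic_X_pow_sub_one p

lemma mkR_repP (u : R2 n) : mkR n (repP u) = u := by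
  rw [repP_eq_modByMonicHom]
  exact AdjoinRoot.mk_leftInverse monic_X_pow_sub_one u

lemma degree_X_pow_sub_one : (X ^ n - 1 : (ZMod 2)[X]).degree = n := by
  rw [← C_1, degree_X_pow_sub_C (NeZero.pos n)]

lemma lt_of_mem_support_repP {u : R2 n} {i : ℕ} (hi : i ∈ (repP u).support) : i < n := by
  obtain ⟨p, rfl⟩ := mkR_surjective u
  rw [repP_mkR] at hi
  have hdeg := degree_modByMonic_lt p (monic_X_pow_sub_one (n := n))
  rw [degree_X_pow_sub_one] at hdeg
  exact_mod_cast (le_degree_of_mem_supp i hi).trans_lt hdeg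

lemma repP_xR_pow (e : ℕ) : repP (xR n ^ e) = X ^ (e % n) := by
  rw [pow_eq_pow_mod e (xR_pow_n n), ← mkR_X, ← map_pow, repP_mkR,
    modByMonic_eq_self_iff monic_X_pow_sub_one, degree_X_pow, degree_X_pow_sub_one]
  exact_mod_cast Nat.mod_lt e (NeZero.pos n)

lemma sum_support_xR_pow (u : R2 n) : ∑ i ∈ (repP u).support, xR n ^ i = u := by
  have hcoeff : ∀ c : ZMod 2, c ≠ 0 → c = 1 := by decide
  conv_rhs => rw [← mkR_repP u, (repP u).as_sum_support, map_sum]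
  refine Finset.sum_congr rfl fun i hi => ?_
  rw [hcoeff _ (mem_support_iff.mp hi), monomial_one_right_eq_X_pow, map_pow, mkR_X]

lemma wt_sum_xR_pow {s : Finset ℕ} {e : ℕ → ℕ} (he : Set.InjOn (fun i => e i % n) s) :
    wt (∑ i ∈ s, xR n ^ e i) = s.card := by
  have hrep : repP (∑ i ∈ s, xR n ^ e i) = ∑ j ∈ s.image (fun i => e i % n), X ^ j := by
    rw [Finset.sum_image he, repP_eq_modByMonicHom, map_sum]
    simp only [← repP_eq_modByMonicHom, repP_xR_pow]
  have hsupp : (repP (∑ i ∈ s, xR n ^ e i)).support = s.image (fun i => e i % n) := by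
    ext j
    simp [hrep, mem_support_iff, finsetSum_coeff, coeff_X_pow]
  rw [wt, hsupp, Finset.card_image_of_injOn he]

lemma augmentation_eq_wt (u : R2 n) : augmentation n u = wt u := by
  conv_lhs => rw [← sum_support_xR_pow u]
  simp [wt]

lemma wt_PmR {m : ℕ} (hm : m ≤ n) : wt (PmR n m) = m := by
  rw [PmR, wt_sum_xR_pow, Finset.card_range]
  intro i hi j hj hij
  rw [Finset.coe_range, Set.mem_Iio] at hi hj
  exact Nat.ModEq.eq_of_lt_of_lt hij (hi.trans_le hm) (hj.trans_le hm)

lemma wt_one : wt (1 : R2 n) = 1 := by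
  simpa [PmR] using wt_PmR (NeZero.one_le : 1 ≤ n)

lemma wt_xR_pow_mul (k : ℕ) (u : R2 n) : wt (xR n ^ k * u) = wt u := by
  conv_lhs => rw [← sum_support_xR_pow u]
  simp only [Finset.mul_sum, ← pow_add]
  refine wt_sum_xR_pow fun i hi j hj hij => ?_
  exact Nat.ModEq.eq_of_lt_of_lt (Nat.ModEq.add_left_cancel' k hij)
    (lt_of_mem_support_repP hi) (lt_of_mem_support_repP hj)

lemma wt_substHom {d : ℕ} (hd : n.Coprime d) (u : R2 n) : wt (substHom n d u) = wt u := by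
  conv_lhs => rw [← sum_support_xR_pow u]
  simp only [map_sum, map_pow, substHom_xR, ← pow_mul]
  refine wt_sum_xR_pow fun i hi j hj hij => ?_
  exact Nat.ModEq.eq_of_lt_of_lt (Nat.ModEq.cancel_left_of_coprime hd hij)
    (lt_of_mem_support_repP hi) (lt_of_mem_support_repP hj)

end Weight

section Displacement

variable {n : ℕ}

/-- The coefficients of an element of `𝔽₂[x]/(xⁿ − 1)`, that is of the group algebra of `ℤ/n`: the
monomial `xᵉ` becomes the vertex `e`. -/
def cyclicCoeff (n : ℕ) : R2 n →+ ZMod n →₀ ZMod 2 :=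
  AddMonoidAlgebra.coeffAddEquiv.toAddMonoidHom.comp <| RingHom.toAddMonoidHom <|
    AdjoinRoot.lift (algebraMap (ZMod 2) (AddMonoidAlgebra (ZMod 2) (ZMod n)))
      (AddMonoidAlgebra.single 1 1)
      (by simp [AddMonoidAlgebra.single_pow, AddMonoidAlgebra.one_def])

lemma cyclicCoeff_xR_pow (e : ℕ) : cyclicCoeff n (xR n ^ e) = Finsupp.single (e : ZMod n) 1 := by
  simp [cyclicCoeff, xR, AddMonoidAlgebra.single_pow]

lemma exists_displacement [NeZero n] {k l : ℕ} {u v : R2 n}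
    (huv : u * (1 + xR n ^ k) + v * (1 + xR n ^ l) = 0) :
    ∃ s t : ℤ, |s| ≤ wt u ∧ |t| ≤ wt v ∧ (s : ZMod 2) = augmentation n u ∧
      (t : ZMod 2) = augmentation n v ∧ (n : ℤ) ∣ k * s + l * t := by
  let edges := (repP u).support.disjSum (repP v).support
  let tail : ℕ ⊕ ℕ → ZMod n := Sum.elim (fun i => i) (fun i => i)
  let head : ℕ ⊕ ℕ → ZMod n := Sum.elim (fun i => (i + k : ℕ)) (fun i => (i + l : ℕ))
  have hclosed : ∑ e ∈ edges, edgeBoundary (tail e) (head e) = edgeBoundary 0 0 := by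
    have hbd := congrArg (cyclicCoeff n) huv
    conv_lhs at hbd => rw [← sum_support_xR_pow u, ← sum_support_xR_pow v]
    rw [edgeBoundary_eq_zero_iff.mpr rfl]
    simpa [Finset.sum_mul, mul_add, ← pow_add, cyclicCoeff_xR_pow, edges, tail, head, edgeBoundary,
      Finset.sum_disjSum, ← Finset.sum_add_distrib] using hbd
  obtain ⟨ε, hε⟩ := exists_orientation_of_sum_edgeBoundary_eq hclosed
  refine ⟨∑ i ∈ (repP u).support, ε (.inl i), ∑ i ∈ (repP v).support, ε (.inr i),
    abs_sum_intUnits_le_card _ _, abs_sum_intUnits_le_card _ _, ?_, ?_, ?_⟩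
  · rw [augmentation_eq_wt, cast_sum_intUnits_eq_card, wt]
  · rw [augmentation_eq_wt, cast_sum_intUnits_eq_card, wt]
  · rw [← ZMod.intCast_zmod_eq_zero_iff_dvd]
    simpa [edges, tail, head, Finset.sum_disjSum, Units.smul_def, Finset.mul_sum, mul_comm]
      using hε

end Displacement

section GeneralizedBicycle

variable {n d : ℕ}

lemma augmentation_eq_zero_of_mem_C2set {c : R2 n} {p : R2 n × R2 n}
    (hp : p ∈ C2set n (1 + xR n) ((1 + xR n) * c)) :
    augmentation n p.1 = 0 ∧ augmentation n p.2 = 0 := by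
  obtain ⟨r, rfl⟩ := hp
  simp [CharTwo.add_self_eq_zero]

lemma notMem_C2set_of_augmentation_add_eq_one {c u v : R2 n}
    (huv : augmentation n u + augmentation n v = 1) :
    (u, v) ∉ C2set n (1 + xR n) ((1 + xR n) * c) := by
  intro hmem
  obtain ⟨hu, hv⟩ : augmentation n u = 0 ∧ augmentation n v = 0 :=
    augmentation_eq_zero_of_mem_C2set hmem
  simp [hu, hv] at huv

lemma mem_C2set_of_augmentation_eq_zero (hn : Odd n) {c : R2 n} {p : R2 n × R2 n}
    (hp : p ∈ C1set n (1 + xR n) ((1 + xR n) * c))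
    (h₁ : augmentation n p.1 = 0) (h₂ : augmentation n p.2 = 0) :
    p ∈ C2set n (1 + xR n) ((1 + xR n) * c) := by
  obtain ⟨u, v⟩ := p
  have := isReduced_R2 hn
  obtain ⟨r, rfl⟩ := augmentation_eq_zero_iff.mp h₁
  obtain ⟨y, hy⟩ : 1 + xR n ∣ v + (1 + xR n) * r * c := by
    rw [← augmentation_eq_zero_iff]
    simp_all
  have hannihilated : (v + (1 + xR n) * r * c) * (1 + xR n) = 0 := by
    change (1 + xR n) * r * ((1 + xR n) * c) + v * (1 + xR n) = 0 at hp
    linear_combination hp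
  have hzero : v + (1 + xR n) * r * c = 0 := by
    refine pow_eq_zero_iff two_ne_zero |>.mp ?_
    linear_combination (v + (1 + xR n) * r * c) * hy + y * hannihilated
  refine ⟨r, Prod.ext (mul_comm _ _) ?_⟩
  rw [CharTwo.add_eq_zero] at hzero
  linear_combination hzero

lemma mem_C1set_one_add_xR_iff {u v : R2 n} :
    (u, v) ∈ C1set n (1 + xR n) ((1 + xR n) * PmR n d) ↔
      u * (1 + xR n ^ d) + v * (1 + xR n) = 0 := by
  rw [← one_add_xR_mul_PmR]
  rfl

lemma one_mk_mem_C1set_diff_C2set (c : R2 n) :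
    (1, c) ∈ C1set n (1 + xR n) ((1 + xR n) * c) \ C2set n (1 + xR n) ((1 + xR n) * c) := by
  refine ⟨?_, fun hmem => ?_⟩
  · change 1 * ((1 + xR n) * c) + c * (1 + xR n) = 0
    rw [one_mul, mul_comm c, CharTwo.add_self_eq_zero]
  · simpa using (augmentation_eq_zero_of_mem_C2set hmem).1

lemma loop_mem_C1set {m k : ℕ} (hn : n = d * m + k) :
    (substHom n d (PmR n m), xR n ^ (d * m) * PmR n k) ∈
      C1set n (1 + xR n) ((1 + xR n) * PmR n d) := by
  rw [mem_C1set_one_add_xR_iff]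
  have hu := congrArg (substHom n d) (one_add_xR_mul_PmR m)
  simp only [map_mul, map_add, map_one, map_pow, substHom_xR, ← pow_mul] at hu
  have hv := one_add_xR_mul_PmR (n := n) k
  have hwrap : xR n ^ (d * m) * xR n ^ k = 1 := by rw [← pow_add, ← hn, xR_pow_n]
  linear_combination hu + xR n ^ (d * m) * hv + hwrap +
    (1 + xR n ^ (d * m)) * CharTwo.two_eq_zero (R := R2 n)

lemma rotate_mem_C1set (hd : n ∣ d ^ 2 + 1) {u v : R2 n}
    (huv : (u, v) ∈ C1set n (1 + xR n) ((1 + xR n) * PmR n d)) :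
    (xR n * substHom n d v, substHom n d u) ∈
      C1set n (1 + xR n) ((1 + xR n) * PmR n d) := by
  rw [mem_C1set_one_add_xR_iff] at huv ⊢
  have hsubst := congrArg (substHom n d) huv
  simp only [map_add, map_mul, map_one, map_pow, map_zero, substHom_xR] at hsubst
  have hperiod : xR n * (xR n ^ d) ^ d = 1 := by
    obtain ⟨k, hk⟩ := hd
    rw [← pow_mul, ← pow_succ', ← sq, hk, pow_mul, xR_pow_n, one_pow]
  linear_combination xR n * hsubst - substHom n d u * hperiod

lemma rotate_mem_C1set_diff_C2set (hn : Odd n) (hd : n ∣ d ^ 2 + 1) {u v : R2 n}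
    (huv : (u, v) ∈ C1set n (1 + xR n) ((1 + xR n) * PmR n d) \
      C2set n (1 + xR n) ((1 + xR n) * PmR n d)) :
    (xR n * substHom n d v, substHom n d u) ∈
      C1set n (1 + xR n) ((1 + xR n) * PmR n d) \
        C2set n (1 + xR n) ((1 + xR n) * PmR n d) := by
  refine ⟨rotate_mem_C1set hd huv.1, fun hmem => huv.2 ?_⟩
  obtain ⟨hv, hu⟩ : augmentation n v = 0 ∧ augmentation n u = 0 := by
    simpa using augmentation_eq_zero_of_mem_C2set hmem
  exact mem_C2set_of_augmentation_eq_zero hn huv.1 hu hv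

lemma add_rotate_notMem_C2set {c u v : R2 n} (huv : augmentation n u + augmentation n v = 1) :
    (u, v) + (xR n * substHom n d v, substHom n d u) ∉
      C2set n (1 + xR n) ((1 + xR n) * c) := by
  intro hmem
  have hsum : augmentation n u + augmentation n v = 0 := by
    simpa using (augmentation_eq_zero_of_mem_C2set hmem).1
  exact zero_ne_one (hsum.symm.trans huv)

lemma wt_rotate [NeZero n] (hd : n.Coprime d) (u v : R2 n) :
    wt (xR n * substHom n d v) + wt (substHom n d u) = wt u + wt v := by
  rw [← pow_one (xR n), wt_xR_pow_mul, wt_substHom hd, wt_substHom hd, add_comm]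

lemma coprime_of_dvd_sq_add_one (hd : n ∣ d ^ 2 + 1) : n.Coprime d :=
  Nat.Coprime.coprime_dvd_left hd (by simp [sq])

lemma odd_of_two_mul_eq_sq_add_one (hn : 2 * n = d ^ 2 + 1) : Odd n := by
  obtain ⟨m, rfl | rfl⟩ := d.even_or_odd'
  · exfalso
    ring_nf at hn
    omega
  · exact ⟨m ^ 2 + m, by linarith⟩

theorem le_wt_add_wt_of_mem_C1set_diff_C2set (hn : 2 * n = d ^ 2 + 1) {p : R2 n × R2 n}
    (hp : p ∈ C1set n (1 + xR n) ((1 + xR n) * PmR n d) \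
      C2set n (1 + xR n) ((1 + xR n) * PmR n d)) :
    d ≤ wt p.1 + wt p.2 := by
  obtain ⟨hp₁, hp₂⟩ := hp
  contrapose! hp₂ with hlt
  have : NeZero n := ⟨by rintro rfl; omega⟩
  obtain ⟨s, t, hs, ht, hs_aug, ht_aug, hdvd⟩ := exists_displacement (k := d) (l := 1)
    (by simpa using mem_C1set_one_add_xR_iff.mp hp₁)
  obtain ⟨rfl, rfl⟩ := eq_zero_of_dvd_of_abs_add_abs_lt (d := d) (n := n)
    (by exact_mod_cast hn) (by simpa using hdvd) (by omega)
  exact mem_C2set_of_augmentation_eq_zero (odd_of_two_mul_eq_sq_add_one hn) hp₁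
    (by simpa using hs_aug.symm) (by simpa using ht_aug.symm)

end GeneralizedBicycle

/-- For the `[[d²+1, 2, d]]` GB code (`d ≥ 3` odd, `2n = d²+1`,
`a = 1+x`, `b = (1+x)·P_d(x)`), with `u = 1 + x^d + ⋯ + x^{d((d−1)/2−1)}` and
`v = x^{n−(d+1)/2} + ⋯ + x^{n−1}`:
(i) `(u, v) ∈ C₁ \ C₂` with weight `d`;
(ii) `(x·v(x^d), u(x^d)) ∈ C₁ \ C₂` with weight `d` (where `x ↦ x^d` is the ring
endomorphism `substHom n d`);
(iii) `(u,v) + (x·v(x^d), u(x^d)) ∉ C₂`, so (i) and (ii) are distinct logical classes;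
(iv) `(1, P_d(x)) ∈ C₁ \ C₂` with weight `d+1`.
Moreover every element of `C₁ \ C₂` has weight at least `d`. -/
theorem stmt_8 (d n : ℕ) (hd : Odd d) (hd3 : 3 ≤ d) (hn : 2 * n = d ^ 2 + 1)
    (a b u v : R2 n) (ha : a = 1 + xR n) (hb : b = (1 + xR n) * PmR n d)
    (hu : u = ∑ i ∈ Finset.range ((d - 1) / 2), xR n ^ (d * i))
    (hv : v = ∑ i ∈ Finset.Ico (n - (d + 1) / 2) n, xR n ^ i) :
    ((u, v) ∈ C1set n a b \ C2set n a b ∧ wt u + wt v = d) ∧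
    ((xR n * substHom n d v, substHom n d u) ∈ C1set n a b \ C2set n a b ∧
      wt (xR n * substHom n d v) + wt (substHom n d u) = d) ∧
    (u, v) + (xR n * substHom n d v, substHom n d u) ∉ C2set n a b ∧
    (((1 : R2 n), PmR n d) ∈ C1set n a b \ C2set n a b ∧
      wt (1 : R2 n) + wt (PmR n d) = d + 1) ∧
    ∀ p ∈ C1set n a b \ C2set n a b, d ≤ wt p.1 + wt p.2 := by
  obtain ⟨m, rfl⟩ := hd
  have : NeZero n := ⟨by omega⟩
  have hn_split : n = (2 * m + 1) * m + (m + 1) := by linarith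
  have hdvd : n ∣ (2 * m + 1) ^ 2 + 1 := ⟨2, by linarith⟩
  have hcop := coprime_of_dvd_sq_add_one hdvd
  replace hu : u = substHom n (2 * m + 1) (PmR n m) := by
    rw [hu, substHom_PmR, show (2 * m + 1 - 1) / 2 = m by omega]
  replace hv : v = xR n ^ ((2 * m + 1) * m) * PmR n (m + 1) := by
    rw [hv, sum_Ico_xR_pow, show n - (2 * m + 1 + 1) / 2 = (2 * m + 1) * m by omega,
      show n - (2 * m + 1) * m = m + 1 by omega]
  have hwt : wt u + wt v = 2 * m + 1 := by
    rw [hu, hv, wt_substHom hcop, wt_xR_pow_mul, wt_PmR (by nlinarith), wt_PmR (by nlinarith)]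
    ring
  have hodd : augmentation n u + augmentation n v = 1 := by
    rw [augmentation_eq_wt, augmentation_eq_wt, ← Nat.cast_add, hwt, ZMod.natCast_eq_one_iff_odd]
    exact odd_two_mul_add_one m
  have huv : (u, v) ∈ C1set n a b \ C2set n a b := by
    rw [ha, hb]
    exact ⟨by rw [hu, hv]; exact loop_mem_C1set hn_split,
      notMem_C2set_of_augmentation_add_eq_one hodd⟩
  subst ha hb
  exact ⟨⟨huv, hwt⟩,
    ⟨rotate_mem_C1set_diff_C2set (odd_of_two_mul_eq_sq_add_one hn) hdvd huv,
      (wt_rotate hcop u v).trans hwt⟩,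
    add_rotate_notMem_C2set hodd,
    ⟨one_mk_mem_C1set_diff_C2set _, by rw [wt_one, wt_PmR (by nlinarith), add_comm]⟩,
    fun _ => le_wt_add_wt_of_mem_C1set_diff_C2set hn⟩

end
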